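/- arXiv:1402.2371 — 2 statements merged into one kernel-verified Lean document; each statement's English description precedes it below -/
import Mathlib

section
/- Let d ≥ 1 and consider binary forms of degree d over ℂ. The maximum Waring rank is r_max = d and the generic Waring rank is r_gen = ⌈(d+1)/2⌉; consequently r_max = 2·r_gen − 2 if d is even and r_max = 2·r_gen − 1 if d is odd. -/
/-!
A binary form is written `∑ n, choose d n * b n * x ^ n * y ^ (d - n)`. It is a combination of `s`
`d`-th powers of linear forms iff `b n = ∑ k, c k * α k ^ n * β k ^ (d - n)` for `n ≤ d`
(`waring_iff`). Sylvester's theorem (`powerSum_of_recurrence`) produces such a representation from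
a separable polynomial `G` of degree `s` that is apolar to `b`, i.e. `∑ j, G_j * b (i + j) = 0`
whenever `i + s ≤ d`.

*Maximum rank.* After a translation `b 0 = 0`, unless the form is a multiple of `y ^ d`. For
`s = d` apolarity is a single linear condition, and when `b 0 = 0` it does not involve the constant
term of `G`. A generic constant term makes `G` separable, so the rank is at most `d`
(`exists_powerSum`). The form `x * y ^ (d - 1)` has rank at least `d` (`le_of_powerSum_tangent`).

*Generic rank.* Let `m = (d + 2) / 2`. If the `m × m` Hankel matrix of `b` is invertible, the rank
is at least `m` (`le_of_det_hankel_ne_zero`), and Cramer's rule gives an apolar polynomial of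
degree `m` with coefficients polynomial in `b` (`apolar`). If it is also separable, the rank is
exactly `m`. Both conditions together are the nonvanishing of one polynomial (`genericPoly`), which
is not zero because the power sums of `m` distinct nodes satisfy both.
-/

open MvPolynomial

/-- The zero locus in affine space `σ → F` of a set `I` of polynomials. -/
def zLocus {F : Type*} [CommSemiring F] {σ : Type*} (I : Set (MvPolynomial σ F)) :
    Set (σ → F) :=
  {x | ∀ p ∈ I, eval x p = 0}

/-- A subset of affine space is Zariski closed if it is the zero locus of a set of
polynomials. -/
def IsZClosed {F : Type*} [CommSemiring F] {σ : Type*} (S : Set (σ → F)) : Prop :=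
  ∃ I : Set (MvPolynomial σ F), S = zLocus I

/-- Zariski open subsets of affine space. -/
def IsZOpen {F : Type*} [CommSemiring F] {σ : Type*} (S : Set (σ → F)) : Prop :=
  IsZClosed Sᶜ

/-- Zariski dense subsets of affine space. -/
def IsZDense {F : Type*} [CommSemiring F] {σ : Type*} (S : Set (σ → F)) : Prop :=
  ∀ C : Set (σ → F), IsZClosed C → S ⊆ C → C = Set.univ

/-- Irreducibility with respect to the Zariski topology. -/
def IsZIrreducible {F : Type*} [CommSemiring F] {σ : Type*} (S : Set (σ → F)) : Prop :=
  S.Nonempty ∧ ∀ C₁ C₂ : Set (σ → F), IsZClosed C₁ → IsZClosed C₂ →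
    S ⊆ C₁ ∪ C₂ → (S ⊆ C₁ ∨ S ⊆ C₂)

/-- An affine cone: a subset closed under scalar multiplication. -/
def IsCone {F : Type*} [CommSemiring F] {σ : Type*} (S : Set (σ → F)) : Prop :=
  ∀ (c : F), ∀ x ∈ S, c • x ∈ S

/-- The set of vectors expressible as a sum of exactly `r` elements of `S`. -/
def sumsOf {F : Type*} [CommSemiring F] {σ : Type*} (S : Set (σ → F)) (r : ℕ) :
    Set (σ → F) :=
  {v | ∃ f : Fin r → (σ → F), (∀ i, f i ∈ S) ∧ ∑ i, f i = v}

/-- The `X`-rank of a vector with respect to the affine cone `S`: the least number of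
elements of `S` summing to it (`⊤` if there is no such decomposition). -/
noncomputable def xRank {F : Type*} [CommSemiring F] {σ : Type*} (S : Set (σ → F))
    (v : σ → F) : ℕ∞ :=
  sInf {r : ℕ∞ | ∃ s : ℕ, r = s ∧ v ∈ sumsOf S s}

/-- The Zariski closure of a subset of affine space. -/
def zClosure {F : Type*} [CommSemiring F] {σ : Type*} (S : Set (σ → F)) : Set (σ → F) :=
  ⋂₀ {C : Set (σ → F) | IsZClosed C ∧ S ⊆ C}

/-- The (affine cone over the) `r`-th secant variety: the Zariski closure of the set of
points of `X`-rank at most `r`. -/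
noncomputable def secantCone {F : Type*} [CommSemiring F] {σ : Type*}
    (Xhat : Set (σ → F)) (r : ℕ) : Set (σ → F) :=
  zClosure {v | xRank Xhat v ≤ (r : ℕ∞)}

/-- The Waring rank of a (homogeneous degree-`d`) polynomial `f` in `n` variables:
the least `r` such that `f` is a linear combination of `r` d-th powers of linear forms
(`⊤` if no such expression exists). -/
noncomputable def waringRank (F : Type*) [CommSemiring F] {n : ℕ} (d : ℕ)
    (f : MvPolynomial (Fin n) F) : ℕ∞ :=
  sInf {r : ℕ∞ | ∃ s : ℕ, r = s ∧ ∃ (c : Fin s → F) (l : Fin s → Fin n → F),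
    f = ∑ i, C (c i) * (∑ j, C (l i j) * X j) ^ d}

/-- The binary form of degree `d` with coefficient vector `a`. -/
noncomputable def binaryForm (d : ℕ) (a : Fin (d + 1) → ℂ) : MvPolynomial (Fin 2) ℂ :=
  ∑ i : Fin (d + 1), C (a i) * X 0 ^ (i : ℕ) * X 1 ^ (d - (i : ℕ))

/-! ### Power sums and Waring decompositions -/

/-- The sequence `b 0, …, b d` is a combination of `s` points `(α ^ n * β ^ (d - n))ₙ` of the
rational normal curve of degree `d`. Values of `b` beyond `d` play no role. For the form
`∑ n, choose d n * b n * x ^ n * y ^ (d - n)` this says that it is a combination of `s`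
`d`-th powers of linear forms `α x + β y`. -/
def HasPowerSum (d s : ℕ) (b : ℕ → ℂ) : Prop :=
  ∃ c α β : Fin s → ℂ, ∀ n ≤ d, b n = ∑ k, c k * α k ^ n * β k ^ (d - n)

lemma binaryForm_eq_sum_monomial (d : ℕ) (a : Fin (d + 1) → ℂ) :
    binaryForm d a = ∑ i : Fin (d + 1),
      monomial (Finsupp.single 0 (i : ℕ) + Finsupp.single 1 (d - (i : ℕ))) (a i) := by
  unfold binaryForm
  refine Finset.sum_congr rfl fun i _ => ?_
  rw [X_pow_eq_monomial, X_pow_eq_monomial, C_mul_monomial, monomial_mul]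
  simp

lemma coeff_binaryForm (d : ℕ) (a : Fin (d + 1) → ℂ) (i : Fin (d + 1)) :
    coeff (Finsupp.single 0 (i : ℕ) + Finsupp.single 1 (d - (i : ℕ))) (binaryForm d a) = a i := by
  rw [binaryForm_eq_sum_monomial, coeff_sum, Finset.sum_eq_single i]
  · simp
  · intro j _ hji
    rw [coeff_monomial, if_neg]
    intro h
    apply hji
    have := DFunLike.congr_fun h 0
    simp at this
    exact Fin.ext this
  · simp

lemma exists_eq_binaryForm {d : ℕ} {f : MvPolynomial (Fin 2) ℂ} (hf : f.IsHomogeneous d) :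
    ∃ a, f = binaryForm d a := by
  refine ⟨fun i => coeff (Finsupp.single 0 (i : ℕ) + Finsupp.single 1 (d - (i : ℕ))) f, ?_⟩
  ext m
  by_cases hm : m 0 + m 1 = d
  · have h0 : m 0 < d + 1 := by omega
    have : m = Finsupp.single 0 ((⟨m 0, h0⟩ : Fin (d + 1)) : ℕ) +
        Finsupp.single 1 (d - ((⟨m 0, h0⟩ : Fin (d + 1)) : ℕ)) := by
      ext j
      fin_cases j
      · simp
      · simp; omega
    rw [this, coeff_binaryForm]
  · rw [hf.coeff_eq_zero, binaryForm_eq_sum_monomial, coeff_sum, Finset.sum_eq_zero]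
    · intro i _
      rw [coeff_monomial, if_neg]
      rintro rfl
      apply hm
      simp
      omega
    · rw [Finsupp.degree_eq_sum, Fin.sum_univ_two]
      exact hm

lemma sum_linear_pow_eq_binaryForm (d s : ℕ) (c : Fin s → ℂ) (l : Fin s → Fin 2 → ℂ) :
    (∑ k, C (c k) * (∑ j, C (l k j) * X j) ^ d : MvPolynomial (Fin 2) ℂ) =
      binaryForm d fun i => (d.choose i : ℂ) *
        ∑ k, c k * l k 0 ^ (i : ℕ) * l k 1 ^ (d - (i : ℕ)) := by
  unfold binaryForm
  simp only [Fin.sum_univ_two, add_pow, map_mul, map_sum, Finset.mul_sum, Finset.sum_mul,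
    map_pow]
  rw [Finset.sum_comm]
  rw [Finset.sum_range]
  refine Finset.sum_congr rfl fun i _ => Finset.sum_congr rfl fun k _ => ?_
  simp only [map_natCast, mul_pow]
  ring

lemma choose_ne_zero' {d n : ℕ} (h : n ≤ d) : (d.choose n : ℂ) ≠ 0 :=
  Nat.cast_ne_zero.2 (Nat.choose_pos h).ne'

/-- Waring decompositions of a binary form are power-sum representations of the sequence `b`
of its coefficients divided by binomial coefficients. -/
lemma waring_iff (d s : ℕ) (a : Fin (d + 1) → ℂ) (b : ℕ → ℂ)
    (hb : ∀ i : Fin (d + 1), a i = d.choose i * b i) :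
    (∃ (c : Fin s → ℂ) (l : Fin s → Fin 2 → ℂ),
      binaryForm d a = ∑ k, C (c k) * (∑ j, C (l k j) * X j) ^ d) ↔ HasPowerSum d s b := by
  constructor
  · rintro ⟨c, l, h⟩
    refine ⟨c, fun k => l k 0, fun k => l k 1, fun n hn => ?_⟩
    rw [sum_linear_pow_eq_binaryForm] at h
    have h1 := congrArg (coeff (Finsupp.single 0 n + Finsupp.single 1 (d - n))) h
    have h2 := fun a => coeff_binaryForm d a ⟨n, by omega⟩
    simp only at h2
    rw [h2, h2, hb] at h1
    exact mul_left_cancel₀ (choose_ne_zero' hn) h1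
  · rintro ⟨c, α, β, h⟩
    refine ⟨c, fun k => ![α k, β k], ?_⟩
    rw [sum_linear_pow_eq_binaryForm]
    congr 1
    ext i
    rw [hb, h i (by omega)]
    simp

lemma waringRank_le {d s : ℕ} {a : Fin (d + 1) → ℂ} {b : ℕ → ℂ}
    (hb : ∀ i : Fin (d + 1), a i = d.choose i * b i) (h : HasPowerSum d s b) :
    waringRank ℂ d (binaryForm d a) ≤ s :=
  sInf_le ⟨s, rfl, (waring_iff d s a b hb).2 h⟩

lemma le_waringRank {d r : ℕ} {a : Fin (d + 1) → ℂ} {b : ℕ → ℂ}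
    (hb : ∀ i : Fin (d + 1), a i = d.choose i * b i)
    (h : ∀ s, HasPowerSum d s b → r ≤ s) :
    (r : ℕ∞) ≤ waringRank ℂ d (binaryForm d a) := by
  refine le_sInf ?_
  rintro _ ⟨s, rfl, hs⟩
  exact_mod_cast h s ((waring_iff d s a b hb).1 hs)

/-- The dehomogenized version of `waring_iff`; it is used to translate the variable. -/
lemma polynomial_powerSum_iff {d s : ℕ} {p : Polynomial ℂ} (hp : p.natDegree ≤ d)
    (c α β : Fin s → ℂ) :
    p = ∑ k, Polynomial.C (c k) *
        (Polynomial.C (α k) * Polynomial.X + Polynomial.C (β k)) ^ d ↔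
      ∀ n ≤ d, p.coeff n / d.choose n = ∑ k, c k * α k ^ n * β k ^ (d - n) := by
  have key : ∀ n, (∑ k, Polynomial.C (c k) *
        (Polynomial.C (α k) * Polynomial.X + Polynomial.C (β k)) ^ d).coeff n =
      d.choose n * ∑ k, c k * α k ^ n * β k ^ (d - n) := by
    intro n
    rw [Polynomial.finsetSum_coeff, Finset.mul_sum]
    refine Finset.sum_congr rfl fun k _ => ?_
    rw [Polynomial.coeff_C_mul]
    have : (Polynomial.C (α k) * Polynomial.X + Polynomial.C (β k)) ^ d =
        ((Polynomial.X + Polynomial.C (β k)) ^ d).comp (Polynomial.C (α k) * Polynomial.X) := by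
      simp
    rw [this, Polynomial.comp_C_mul_X_coeff, Polynomial.coeff_X_add_C_pow]
    ring
  constructor
  · intro h n hn
    rw [div_eq_iff (choose_ne_zero' hn), mul_comm, ← key, ← h]
  · intro h
    ext n
    rw [key]
    by_cases hn : n ≤ d
    · rw [← h n hn]
      field_simp [choose_ne_zero' hn]
    · rw [Polynomial.coeff_eq_zero_of_natDegree_lt (by omega),
        Nat.choose_eq_zero_of_lt (by omega)]
      simp

lemma exists_nodes {s : ℕ} {G : Polynomial ℂ} (hsep : G.Separable) (hdeg : G.natDegree = s) :
    ∃ α : Fin s → ℂ, Function.Injective α ∧ ∀ k, G.eval (α k) = 0 := by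
  have hcard : G.roots.toFinset.card = s := by
    rw [Multiset.toFinset_card_of_nodup (Polynomial.nodup_roots hsep),
      IsAlgClosed.card_roots_eq_natDegree, hdeg]
  let e := Finset.equivFinOfCardEq hcard
  refine ⟨fun k => e.symm k, Subtype.val_injective.comp e.symm.injective, fun k => ?_⟩
  have h := (e.symm k).2
  rw [Multiset.mem_toFinset] at h
  exact Polynomial.isRoot_of_mem_roots h

/-- Sylvester's theorem: a separable apolar polynomial `G` of degree `s` yields a decomposition
into `s` powers, with nodes the roots of `G`. The weights are fixed by the first `s` values of `b`
through an invertible Vandermonde system, and the recurrence propagates the equality. -/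
lemma powerSum_of_recurrence {d s : ℕ} {b : ℕ → ℂ} {G : Polynomial ℂ} (hsep : G.Separable)
    (hdeg : G.natDegree = s)
    (hrec : ∀ i, i + s ≤ d → ∑ j ∈ Finset.range (s + 1), G.coeff j * b (i + j) = 0) :
    HasPowerSum d s b := by
  have hlead : G.coeff s ≠ 0 := by
    rw [← hdeg, Polynomial.coeff_natDegree, Polynomial.leadingCoeff_ne_zero]
    exact hsep.ne_zero
  obtain ⟨α, hinj, hroot⟩ := exists_nodes hsep hdeg
  have hV : IsUnit (Matrix.vandermonde α).transpose.det := by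
    rw [Matrix.det_transpose, isUnit_iff_ne_zero]
    exact Matrix.det_vandermonde_ne_zero_iff.2 hinj
  set c : Fin s → ℂ := ((Matrix.vandermonde α).transpose)⁻¹.mulVec (fun i => b i) with hc
  have hsmall : ∀ i : Fin s, b i = ∑ k, c k * α k ^ (i : ℕ) := by
    intro i
    have h1 : (Matrix.vandermonde α).transpose.mulVec c = fun i : Fin s => b i := by
      rw [hc, Matrix.mulVec_mulVec, Matrix.mul_nonsing_inv _ hV, Matrix.one_mulVec]
    have h2 := congrFun h1 i
    rw [← h2]
    simp only [Matrix.mulVec, dotProduct, Matrix.transpose_apply, Matrix.vandermonde_apply]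
    exact Finset.sum_congr rfl fun k _ => mul_comm _ _
  refine ⟨c, α, 1, fun n => ?_⟩
  simp only [Pi.one_apply, one_pow, mul_one]
  induction n using Nat.strong_induction_on with
  | _ n ih =>
    intro hn
    by_cases hns : n < s
    · exact hsmall ⟨n, hns⟩
    obtain ⟨i, rfl⟩ := Nat.exists_eq_add_of_le' (not_lt.1 hns)
    have h1 := hrec i hn
    have h2 : ∑ j ∈ Finset.range (s + 1), G.coeff j * ∑ k, c k * α k ^ (i + j) = 0 := by
      simp only [Finset.mul_sum]
      rw [Finset.sum_comm]
      refine Finset.sum_eq_zero fun k _ => ?_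
      have h3 := hroot k
      rw [Polynomial.eval_eq_sum_range, hdeg] at h3
      calc _ = c k * α k ^ i * ∑ j ∈ Finset.range (s + 1), G.coeff j * α k ^ j := by
            rw [Finset.mul_sum]
            refine Finset.sum_congr rfl fun j _ => ?_
            ring
        _ = 0 := by rw [h3, mul_zero]
    rw [Finset.sum_range_succ] at h1 h2
    have h4 : ∑ j ∈ Finset.range s, G.coeff j * b (i + j) =
        ∑ j ∈ Finset.range s, G.coeff j * ∑ k, c k * α k ^ (i + j) := by
      refine Finset.sum_congr rfl fun j hj => ?_
      rw [Finset.mem_range] at hj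
      rw [ih (i + j) (by omega) (by omega)]
    rw [h4] at h1
    exact mul_left_cancel₀ hlead (add_left_cancel (h1.trans h2.symm))

/-! ### The maximum rank -/

/-- `g + t` has a double root only if `t` is the negative of one of the finitely many critical
values of `g`. -/
lemma exists_separable_add_C {g : Polynomial ℂ} (hg : 0 < g.natDegree) :
    ∃ t : ℂ, (g + Polynomial.C t).Separable := by
  have hg' : Polynomial.derivative g ≠ 0 := by
    intro h
    exact hg.ne' (Polynomial.derivative_eq_zero.1 h)
  obtain ⟨t, ht⟩ := Infinite.exists_notMem_finset
    ((Polynomial.derivative g).roots.toFinset.image fun z => -g.eval z)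
  refine ⟨t, ?_⟩
  rw [Polynomial.separable_def, Polynomial.isCoprime_iff_aeval_ne_zero_of_isAlgClosed ℂ ℂ]
  by_contra! hcop
  obtain ⟨z, hz1, hz2⟩ := hcop
  apply ht
  simp only [Polynomial.coe_aeval_eq_eval, Polynomial.derivative_add, Polynomial.derivative_C, add_zero, Polynomial.eval_add,
    Polynomial.eval_C] at hz1 hz2
  rw [Finset.mem_image]
  refine ⟨z, ?_, ?_⟩
  · simpa [hg'] using hz2
  · linear_combination -hz1

/-- Rank at most `d` when the coefficient of `y ^ d` vanishes: then adding a constant to an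
apolar polynomial of degree `d` keeps it apolar, and a suitable constant makes it separable. -/
lemma exists_powerSum_of_zero {d : ℕ} (hd : 1 ≤ d) {b : ℕ → ℂ} (h0 : b 0 = 0) :
    ∃ s ≤ d, HasPowerSum d s b := by
  by_cases h : ∃ j < d, b j ≠ 0
  · obtain ⟨j, hjd, hj⟩ := h
    have hj0 : j ≠ 0 := by rintro rfl; exact hj h0
    -- `g` is apolar of degree exactly `d`: `b d - (b d / b j) * b j = 0`.
    set g : Polynomial ℂ := Polynomial.X ^ d + Polynomial.C (-(b d / b j)) * Polynomial.X ^ j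
      with hg
    have hgdeg : g.natDegree = d := by
      rw [hg]
      rw [Polynomial.natDegree_add_eq_left_of_natDegree_lt] <;> rw [Polynomial.natDegree_X_pow]
      exact (Polynomial.natDegree_C_mul_X_pow_le _ _).trans_lt hjd
    obtain ⟨t, ht⟩ := exists_separable_add_C (g := g) (by omega)
    refine ⟨d, le_rfl, powerSum_of_recurrence ht ?_ ?_⟩
    · rw [Polynomial.natDegree_add_C, hgdeg]
    · intro i hi
      obtain rfl : i = 0 := by omega
      have hc : ∀ n, (g + Polynomial.C t).coeff n =
          (if n = d then 1 else 0) + (if n = j then -(b d / b j) else 0) +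
            (if n = 0 then t else 0) := by
        intro n
        rw [hg, Polynomial.coeff_add, Polynomial.coeff_add, Polynomial.coeff_C_mul,
          Polynomial.coeff_X_pow, Polynomial.coeff_X_pow, Polynomial.coeff_C, mul_ite, mul_one,
          mul_zero]
      simp only [hc, add_mul, ite_mul, zero_mul, Finset.sum_add_distrib, Finset.sum_ite_eq',
        Finset.mem_range, zero_add, h0]
      rw [if_pos (by omega), if_pos (by omega), if_pos (by omega)]
      field_simp
      ring
  -- Otherwise the form is a multiple of `x ^ d`.
  · push Not at h
    refine ⟨1, hd, fun _ => b d, fun _ => 1, fun _ => 0, fun n hn => ?_⟩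
    rcases hn.lt_or_eq with hn' | rfl
    · simp [h n hn', Nat.sub_ne_zero_of_lt hn']
    · simp

/-- A nonconstant polynomial has a root, which a translation of the variable moves to `0`; this
reduces to `exists_powerSum_of_zero`. -/
lemma exists_powerSum_polynomial {d : ℕ} (hd : 1 ≤ d) {p : Polynomial ℂ} (hp : p.natDegree ≤ d) :
    ∃ s ≤ d, HasPowerSum d s fun n => p.coeff n / d.choose n := by
  by_cases hp0 : p.natDegree = 0
  · refine ⟨1, hd, fun _ => p.coeff 0, fun _ => 0, fun _ => 1, fun n hn => ?_⟩
    rcases Nat.eq_zero_or_pos n with rfl | hn'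
    · simp
    · simp [hn'.ne', Polynomial.coeff_eq_zero_of_natDegree_lt (hp0 ▸ hn')]
  · obtain ⟨z, hz⟩ := IsAlgClosed.exists_root p (by
      intro h; exact hp0 (Polynomial.natDegree_eq_of_degree_eq_some h))
    set q := p.comp (Polynomial.X + Polynomial.C z) with hq
    have hqd : q.natDegree ≤ d := by
      rw [hq, Polynomial.natDegree_comp, Polynomial.natDegree_X_add_C, mul_one]
      exact hp
    obtain ⟨s, hs, c, α, β, h⟩ := exists_powerSum_of_zero hd
      (b := fun n => q.coeff n / d.choose n) (by
        simp only [Polynomial.coeff_zero_eq_eval_zero, hq]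
        simp [hz.eq_zero])
    have h1 := (polynomial_powerSum_iff hqd c α β).2 h
    refine ⟨s, hs, c, α, fun k => β k - α k * z, ?_⟩
    rw [← polynomial_powerSum_iff hp]
    have h2 : p = q.comp (Polynomial.X - Polynomial.C z) := by
      rw [hq, Polynomial.comp_assoc]
      simp
    rw [h2, h1, Polynomial.sum_comp]
    refine Finset.sum_congr rfl fun k _ => ?_
    simp
    left
    ring

lemma exists_powerSum {d : ℕ} (hd : 1 ≤ d) (b : ℕ → ℂ) : ∃ s ≤ d, HasPowerSum d s b := by
  set p : Polynomial ℂ := ∑ n ∈ Finset.range (d + 1), Polynomial.monomial n (d.choose n * b n)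
    with hp
  have hcoeff : ∀ n ≤ d, p.coeff n / d.choose n = b n := by
    intro n hn
    rw [hp, Polynomial.finsetSum_coeff]
    simp only [Polynomial.coeff_monomial, Finset.sum_ite_eq', Finset.mem_range]
    rw [if_pos (by omega)]
    field_simp [choose_ne_zero' hn]
  have hdeg : p.natDegree ≤ d := Polynomial.natDegree_sum_le_of_forall_le _ _ fun n hn =>
    (Polynomial.natDegree_monomial_le _).trans (by simpa [Nat.lt_succ_iff] using hn)
  obtain ⟨s, hs, c, α, β, h⟩ := exists_powerSum_polynomial hd hdeg
  exact ⟨s, hs, c, α, β, fun n hn => (hcoeff n hn).symm.trans (h n hn)⟩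

/-- A form `x * y ^ (d - 1)`, up to a multiple of `y ^ d` and a scalar, needs at least `d` powers:
a monic polynomial of degree `d - 1` vanishing at all slopes `β / α` of fewer linear forms would
force `b 1 = 0`. -/
lemma le_of_powerSum_tangent {d s : ℕ} (hd : 1 ≤ d) {b : ℕ → ℂ} (h1 : b 1 ≠ 0)
    (h2 : ∀ n, 2 ≤ n → n ≤ d → b n = 0) (h : HasPowerSum d s b) : d ≤ s := by
  by_contra! hsd
  obtain ⟨c, α, β, h⟩ := h
  -- Linear forms with `α k = 0` do not contribute to `b n` for `n ≥ 1`; as `d ≥ 1`, their weight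
  -- `e k` is `0`, so the junk slope `β k / 0 = 0` is harmless.
  set e : Fin s → ℂ := fun k => c k * α k ^ d with he
  set γ : Fin s → ℂ := fun k => β k / α k with hγ
  have hb : ∀ n, 1 ≤ n → n ≤ d → b n = ∑ k, e k * γ k ^ (d - n) := by
    intro n hn hnd
    rw [h n hnd]
    refine Finset.sum_congr rfl fun k _ => ?_
    simp only [he, hγ]
    by_cases hk : α k = 0
    · simp [hk, show n ≠ 0 by omega, show d ≠ 0 by omega]
    · rw [div_pow]
      have : α k ^ d = α k ^ n * α k ^ (d - n) := by rw [← pow_add]; congr 1; omega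
      rw [this]
      field_simp
  set G : Polynomial ℂ := (∏ k, (Polynomial.X - Polynomial.C (γ k))) *
    Polynomial.X ^ (d - 1 - s) with hG
  have hmonic : G.Monic :=
    (Polynomial.monic_prod_of_monic _ _ fun k _ => Polynomial.monic_X_sub_C _).mul
      (Polynomial.monic_X_pow _)
  have hdeg : G.natDegree = d - 1 := by
    rw [hG, Polynomial.Monic.natDegree_mul
      (Polynomial.monic_prod_of_monic _ _ fun k _ => Polynomial.monic_X_sub_C _)
      (Polynomial.monic_X_pow _), Polynomial.natDegree_prod_of_monic _ _ fun k _ =>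
        Polynomial.monic_X_sub_C _]
    simp
    omega
  have hroot : ∀ k, G.eval (γ k) = 0 := by
    intro k
    rw [hG, Polynomial.eval_mul, Polynomial.eval_prod,
      Finset.prod_eq_zero (Finset.mem_univ k) (by simp), zero_mul]
  have hzero : ∑ j ∈ Finset.range (d - 1 + 1), G.coeff j * b (d - j) = 0 := by
    calc _ = ∑ j ∈ Finset.range (d - 1 + 1), ∑ k, e k * (G.coeff j * γ k ^ j) := by
          refine Finset.sum_congr rfl fun j hj => ?_
          rw [Finset.mem_range] at hj
          rw [hb _ (by omega) (by omega), Finset.mul_sum, show d - (d - j) = j by omega]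
          exact Finset.sum_congr rfl fun k _ => by ring
      _ = ∑ k, e k * G.eval (γ k) := by
          rw [Finset.sum_comm]
          refine Finset.sum_congr rfl fun k _ => ?_
          rw [Polynomial.eval_eq_sum_range, hdeg, Finset.mul_sum]
      _ = 0 := by simp [hroot]
  rw [Finset.sum_range_succ, Finset.sum_eq_zero, zero_add, ← hdeg, hmonic.coeff_natDegree, hdeg,
    one_mul, show d - (d - 1) = 1 by omega] at hzero
  · exact h1 hzero
  · intro j hj
    rw [Finset.mem_range] at hj
    rw [h2 _ (by omega) (by omega), mul_zero]

/-! ### The generic rank -/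

/-- The `m × m` Hankel (catalecticant) matrix of the sequence `b`. -/
def hankel {R : Type*} (m : ℕ) (b : ℕ → R) : Matrix (Fin m) (Fin m) R :=
  Matrix.of fun i j => b (i + j)

/-- A decomposition into `s` powers factors the Hankel matrix through an `s`-dimensional space. -/
lemma le_of_det_hankel_ne_zero {d m s : ℕ} (hm : 2 * m ≤ d + 2) {b : ℕ → ℂ}
    (hdet : (hankel m b).det ≠ 0) (h : HasPowerSum d s b) : m ≤ s := by
  obtain ⟨c, α, β, h⟩ := h
  have hfac : hankel m b =
      (Matrix.of fun (i : Fin m) (k : Fin s) => c k * α k ^ (i : ℕ) * β k ^ (m - 1 - (i : ℕ))) *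
      (Matrix.of fun (k : Fin s) (j : Fin m) =>
        α k ^ (j : ℕ) * β k ^ (d - (m - 1) - (j : ℕ))) := by
    ext i j
    rw [Matrix.mul_apply]
    simp only [hankel, Matrix.of_apply]
    rw [h _ (by omega)]
    refine Finset.sum_congr rfl fun k _ => ?_
    have : d - ((i : ℕ) + j) = (m - 1 - (i : ℕ)) + (d - (m - 1) - (j : ℕ)) := by omega
    rw [this, pow_add, pow_add]
    ring
  have hrank : (hankel m b).rank = m := by
    rw [Matrix.rank_of_isUnit _ ((Matrix.isUnit_iff_isUnit_det _).2 (isUnit_iff_ne_zero.2 hdet)),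
      Fintype.card_fin]
  calc m = (hankel m b).rank := hrank.symm
    _ ≤ _ := by rw [hfac]; exact Matrix.rank_mul_le_left _ _
    _ ≤ s := Matrix.rank_le_width _

/-- The polynomial `G = det H * X ^ m + ⋯` of degree at most `m` whose coefficients solve
`∑ j, G_j * b (i + j) = 0` for `i < m`, where `H` is the Hankel matrix of `b`. Its lower
coefficients come from Cramer's rule, so they are polynomial in `b`. -/
noncomputable def apolar {R : Type*} [CommRing R] (m : ℕ) (b : ℕ → R) : Polynomial R :=
  Polynomial.C (hankel m b).det * Polynomial.X ^ m -
    ∑ j : Fin m, Polynomial.C (((hankel m b).adjugate.mulVec fun i => b (i + m)) j) *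
      Polynomial.X ^ (j : ℕ)

lemma apolar_map {R S : Type*} [CommRing R] [CommRing S] (φ : R →+* S) (m : ℕ) (b : ℕ → R) :
    (apolar m b).map φ = apolar m fun n => φ (b n) := by
  have hH : φ.mapMatrix (hankel m b) = hankel m fun n => φ (b n) := by
    ext i j; simp [hankel]
  unfold apolar
  rw [← hH, ← RingHom.map_adjugate, ← RingHom.map_det]
  simp only [Polynomial.map_sub, Polynomial.map_mul, Polynomial.map_C, Polynomial.map_pow,
    Polynomial.map_X, Polynomial.map_sum]
  congr 1
  refine Finset.sum_congr rfl fun j _ => ?_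
  congr 2
  rw [RingHom.map_mulVec]
  rfl

lemma apolar_coeff_self {R : Type*} [CommRing R] (m : ℕ) (b : ℕ → R) :
    (apolar m b).coeff m = (hankel m b).det := by
  simp only [apolar, Polynomial.coeff_sub, Polynomial.coeff_C_mul, Polynomial.coeff_X_pow,
    Polynomial.finsetSum_coeff]
  rw [Finset.sum_eq_zero]
  · simp
  · intro j _
    rw [if_neg (by omega), mul_zero]

lemma apolar_coeff_lt {R : Type*} [CommRing R] (m : ℕ) (b : ℕ → R) (j : Fin m) :
    (apolar m b).coeff j = -((hankel m b).adjugate.mulVec fun i => b (i + m)) j := by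
  simp only [apolar, Polynomial.coeff_sub, Polynomial.coeff_C_mul, Polynomial.coeff_X_pow,
    Polynomial.finsetSum_coeff]
  rw [if_neg (by omega), Finset.sum_eq_single j]
  · simp
  · intro k _ hk
    rw [if_neg (fun h => hk (Fin.ext h.symm)), mul_zero]
  · simp

lemma apolar_natDegree_le {R : Type*} [CommRing R] (m : ℕ) (b : ℕ → R) :
    (apolar m b).natDegree ≤ m := by
  unfold apolar
  refine (Polynomial.natDegree_sub_le _ _).trans (max_le (Polynomial.natDegree_C_mul_X_pow_le _ _)
    (Polynomial.natDegree_sum_le_of_forall_le _ _ fun j _ =>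
      (Polynomial.natDegree_C_mul_X_pow_le _ _).trans j.2.le))

lemma apolar_natDegree {R : Type*} [CommRing R] {m : ℕ} {b : ℕ → R}
    (h : (hankel m b).det ≠ 0) : (apolar m b).natDegree = m :=
  Polynomial.natDegree_eq_of_le_of_coeff_ne_zero (apolar_natDegree_le m b)
    (by rwa [apolar_coeff_self])

lemma apolar_recurrence {R : Type*} [CommRing R] {m : ℕ} (b : ℕ → R) {i : ℕ} (hi : i < m) :
    ∑ j ∈ Finset.range (m + 1), (apolar m b).coeff j * b (i + j) = 0 := by
  rw [Finset.sum_range_succ, apolar_coeff_self, Finset.sum_range]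
  set v : Fin m → R := fun i => b (i + m) with hv
  have h1 : (hankel m b).mulVec ((hankel m b).adjugate.mulVec v) = (hankel m b).det • v := by
    rw [Matrix.mulVec_mulVec, Matrix.mul_adjugate, Matrix.smul_mulVec, Matrix.one_mulVec]
  have h2 := congrFun h1 ⟨i, hi⟩
  simp only [Matrix.mulVec, dotProduct, Pi.smul_apply, smul_eq_mul] at h2
  rw [show b (i + m) = v ⟨i, hi⟩ from rfl, ← h2, ← Finset.sum_add_distrib]
  refine Finset.sum_eq_zero fun j _ => ?_
  rw [apolar_coeff_lt]
  simp only [hankel, Matrix.of_apply, Matrix.mulVec, dotProduct, hv]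
  ring

lemma resultant_ne_zero_iff_separable {m : ℕ} {G : Polynomial ℂ} (hm : 0 < m)
    (hG : G.natDegree = m) :
    Polynomial.resultant G (Polynomial.derivative G) m (m - 1) ≠ 0 ↔ G.Separable := by
  have hG0 : G ≠ 0 := by rintro rfl; simp at hG; omega
  have hd : (Polynomial.derivative G).natDegree = m - 1 := by
    rw [Polynomial.natDegree_derivative, hG]
  have := Polynomial.resultant_eq_zero_iff (f := G) (g := Polynomial.derivative G)
  rw [hG, hd] at this
  rw [Ne, this, Polynomial.separable_def]
  simp [hG0]

/-- The power sums of the nodes `0, …, m - 1`: a sequence at which the genericity conditions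
hold. -/
noncomputable def basePoint (m n : ℕ) : ℂ := ∑ k : Fin m, ((k : ℕ) : ℂ) ^ n

lemma node_injective (m : ℕ) : Function.Injective fun k : Fin m => ((k : ℕ) : ℂ) :=
  fun _ _ h => Fin.ext (Nat.cast_injective h)

lemma det_hankel_basePoint (m : ℕ) : (hankel m (basePoint m)).det ≠ 0 := by
  set v : Fin m → ℂ := fun k => ((k : ℕ) : ℂ) with hv
  have : hankel m (basePoint m) = (Matrix.vandermonde v).transpose * Matrix.vandermonde v := by
    ext i j
    rw [Matrix.vandermonde_transpose_mul_vandermonde]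
    rfl
  rw [this, Matrix.det_mul, Matrix.det_transpose]
  have := Matrix.det_vandermonde_ne_zero_iff.2 (node_injective m)
  exact mul_ne_zero this this

/-- The apolar polynomial of `basePoint m` has the `m` distinct roots `0, …, m - 1`. -/
lemma separable_apolar_basePoint (m : ℕ) : (apolar m (basePoint m)).Separable := by
  set G := apolar m (basePoint m) with hG
  set v : Fin m → ℂ := fun k => ((k : ℕ) : ℂ) with hv
  have hdeg : G.natDegree = m := apolar_natDegree (det_hankel_basePoint m)
  have hG0 : G ≠ 0 := by
    intro h
    have h1 := apolar_coeff_self m (basePoint m)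
    rw [← hG, h, Polynomial.coeff_zero] at h1
    exact det_hankel_basePoint m h1.symm
  have hroot : (fun k => G.eval (v k)) = 0 := by
    refine Matrix.eq_zero_of_forall_pow_sum_mul_pow_eq_zero (node_injective m) fun i => ?_
    -- The recurrence reads `∑ k, G(k) * k ^ i = 0` for `i < m`, a Vandermonde system.
    have h1 := apolar_recurrence (basePoint m) i.2
    rw [← h1]
    simp only [Polynomial.eval_eq_sum_range, hdeg, basePoint, Finset.mul_sum, Finset.sum_mul]
    rw [Finset.sum_comm]
    refine Finset.sum_congr rfl fun j _ => Finset.sum_congr rfl fun k _ => ?_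
    simp only [hv]
    ring
  have hsub : Finset.univ.image v ⊆ G.roots.toFinset := by
    intro z hz
    obtain ⟨k, -, rfl⟩ := Finset.mem_image.1 hz
    rw [Multiset.mem_toFinset, Polynomial.mem_roots hG0]
    exact congrFun hroot k
  have hcard := Finset.card_le_card hsub
  rw [Finset.card_image_of_injective _ (node_injective m), Finset.card_univ,
    Fintype.card_fin] at hcard
  rw [← Polynomial.nodup_roots_iff_of_splits hG0 (IsAlgClosed.splits G)]
  rw [← Multiset.toFinset_card_eq_card_iff_nodup]
  refine le_antisymm (Multiset.toFinset_card_le _) ?_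
  rw [IsAlgClosed.card_roots_eq_natDegree, hdeg]
  exact hcard

/-- The sequence of a general binary form of degree `d`: its `n`-th term is the `n`-th coordinate
divided by `choose d n`. Beyond `d` it continues with constants. For even `d = 2 * m - 2` the term
of index `d + 1` enters `apolar m`, and the constants make `basePoint m` a specialization. -/
noncomputable def genericSeq (d m n : ℕ) : MvPolynomial (Fin (d + 1)) ℂ :=
  if h : n < d + 1 then C ((d.choose n : ℂ)⁻¹) * X ⟨n, h⟩ else C (basePoint m n)

/-- The polynomial in the coefficients of a form whose nonvanishing says that the Hankel matrix
is invertible and the apolar polynomial is separable. -/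
noncomputable def genericPoly (d m : ℕ) : MvPolynomial (Fin (d + 1)) ℂ :=
  (hankel m (genericSeq d m)).det *
    Polynomial.resultant (apolar m (genericSeq d m))
      (Polynomial.derivative (apolar m (genericSeq d m))) m (m - 1)

lemma eval_genericPoly (d m : ℕ) (a : Fin (d + 1) → ℂ) :
    eval a (genericPoly d m) =
      (hankel m fun n => eval a (genericSeq d m n)).det *
        Polynomial.resultant (apolar m fun n => eval a (genericSeq d m n))
          (Polynomial.derivative (apolar m fun n => eval a (genericSeq d m n))) m (m - 1) := by
  rw [genericPoly, map_mul, ← Polynomial.resultant_map_map, ← Polynomial.derivative_map,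
    apolar_map, RingHom.map_det]
  congr 2

/-- The evaluated generic sequence is the normalized coefficient sequence of the form. -/
lemma eval_genericSeq (d m : ℕ) (a : Fin (d + 1) → ℂ) (i : Fin (d + 1)) :
    a i = d.choose i * eval a (genericSeq d m i) := by
  have := choose_ne_zero' (Nat.lt_succ_iff.1 i.2)
  simp only [genericSeq, i.2, dif_pos, map_mul, eval_C, eval_X]
  field_simp

lemma genericPoly_ne_zero {d m : ℕ} (hm : 0 < m) : genericPoly d m ≠ 0 := by
  intro h
  have h1 := eval_genericPoly d m fun i => d.choose i * basePoint m i
  have hseq : (fun n => eval (fun i : Fin (d + 1) => (d.choose i : ℂ) * basePoint m i)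
      (genericSeq d m n)) = basePoint m := by
    funext n
    unfold genericSeq
    split_ifs with hn
    · have := choose_ne_zero' (Nat.lt_succ_iff.1 hn)
      simp only [map_mul, eval_C, eval_X]
      field_simp
    · simp
  rw [hseq, h, map_zero] at h1
  exact mul_ne_zero (det_hankel_basePoint m) ((resultant_ne_zero_iff_separable hm
    (apolar_natDegree (det_hankel_basePoint m))).2 (separable_apolar_basePoint m)) h1.symm

lemma waringRank_of_genericPoly {d m : ℕ} (hm : 0 < m) (h1 : 2 * m ≤ d + 2) (h2 : d < 2 * m)
    {a : Fin (d + 1) → ℂ} (ha : eval a (genericPoly d m) ≠ 0) :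
    waringRank ℂ d (binaryForm d a) = m := by
  rw [eval_genericPoly] at ha
  have hdet := left_ne_zero_of_mul ha
  have hdeg := apolar_natDegree hdet
  have hab := eval_genericSeq d m a
  refine le_antisymm (waringRank_le (b := fun n => eval a (genericSeq d m n)) hab ?_)
    (le_waringRank (b := fun n => eval a (genericSeq d m n)) hab fun s hs => le_of_det_hankel_ne_zero h1 hdet hs)
  exact powerSum_of_recurrence
    ((resultant_ne_zero_iff_separable hm hdeg).1 (right_ne_zero_of_mul ha)) hdeg
    fun i hi => apolar_recurrence _ (by omega)

lemma isZOpen_basicOpen {σ : Type*} (p : MvPolynomial σ ℂ) : IsZOpen {a | eval a p ≠ 0} :=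
  ⟨{p}, by ext a; simp [zLocus]⟩

lemma isZDense_basicOpen {σ : Type*} {p : MvPolynomial σ ℂ} (hp : p ≠ 0) :
    IsZDense {a | eval a p ≠ 0} := by
  rintro _ ⟨I, rfl⟩ hsub
  rw [Set.eq_univ_iff_forall]
  intro a q hq
  have hqp : q * p = 0 := by
    refine MvPolynomial.funext fun x => ?_
    rw [map_mul, map_zero]
    by_cases hx : eval x p = 0
    · rw [hx, mul_zero]
    · rw [hsub hx q hq, zero_mul]
  rw [(mul_eq_zero.1 hqp).resolve_right hp, map_zero]

/-- For binary forms of degree `d` over `ℂ`, the maximum Waring rank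
is `d` and the generic Waring rank is `⌈(d+1)/2⌉`; consequently
`r_max = 2r_gen - 2` for even `d` and `r_max = 2r_gen - 1` for odd `d`. -/
theorem stmt_13 (d : ℕ) (hd : 1 ≤ d) :
    IsGreatest {r : ℕ∞ | ∃ f : MvPolynomial (Fin 2) ℂ, f ≠ 0 ∧ f.IsHomogeneous d ∧
        waringRank ℂ d f = r} (d : ℕ∞) ∧
    (∃ U : Set (Fin (d + 1) → ℂ), IsZOpen U ∧ IsZDense U ∧
      ∀ a ∈ U, waringRank ℂ d (binaryForm d a) = (((d + 2) / 2 : ℕ) : ℕ∞)) ∧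
    (Even d → d = 2 * ((d + 2) / 2) - 2) ∧
    (Odd d → d = 2 * ((d + 2) / 2) - 1) := by
  refine ⟨⟨?_, ?_⟩, ?_, ?_, ?_⟩
  -- The form `x * y ^ (d - 1)`, up to a scalar, attains the maximum.
  · set b : ℕ → ℂ := fun n => if n = 1 then 1 else 0 with hb
    set a : Fin (d + 1) → ℂ := fun i => d.choose i * b i with ha
    have hab : ∀ i : Fin (d + 1), a i = d.choose i * b i := fun _ => rfl
    have hle := le_waringRank hab fun s hs =>
      le_of_powerSum_tangent hd (by simp [hb]) (fun n hn _ => by simp [hb]; omega) hs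
    refine ⟨binaryForm d a, ?_, ?_, ?_⟩
    · intro h
      have h1 := coeff_binaryForm d a ⟨1, by omega⟩
      rw [h, coeff_zero] at h1
      simp only [ha, hb, if_true, mul_one, Nat.choose_one_right] at h1
      have h2 : 0 = d := by exact_mod_cast h1
      omega
    · refine IsHomogeneous.sum _ _ _ fun i _ => ?_
      have h1 := ((isHomogeneous_C (Fin 2) (a i)).mul (isHomogeneous_X_pow (0 : Fin 2) i)).mul
        (isHomogeneous_X_pow (R := ℂ) (1 : Fin 2) (d - i))
      rwa [show 0 + (i : ℕ) + (d - i) = d by omega] at h1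
    · obtain ⟨s, hs, h⟩ := exists_powerSum hd b
      exact le_antisymm ((waringRank_le hab h).trans (by exact_mod_cast hs)) hle
  · rintro _ ⟨f, -, hf, rfl⟩
    obtain ⟨a, rfl⟩ := exists_eq_binaryForm hf
    obtain ⟨s, hs, h⟩ := exists_powerSum hd fun n => eval a (genericSeq d 0 n)
    exact (waringRank_le (b := fun n => eval a (genericSeq d 0 n)) (eval_genericSeq d 0 a) h).trans (by exact_mod_cast hs)
  · exact ⟨_, isZOpen_basicOpen (genericPoly d ((d + 2) / 2)),
      isZDense_basicOpen (genericPoly_ne_zero (by omega)),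
      fun a ha => waringRank_of_genericPoly (by omega) (by omega) (by omega) ha⟩
  · rintro ⟨k, rfl⟩
    omega
  · rintro ⟨k, rfl⟩
    omega
end

section
/- Let X ⊆ ℙⁿ(ℝ) be an irreducible nondegenerate real projective variety whose real points are Zariski dense, and let r₀ be the minimum typical rank with respect to X. Then the maximum complex X_ℂ-rank of vectors in ℂ^{n+1} with respect to the complexification X_ℂ is at most 2·r₀. -/
/-!
Write `r₀` for the least typical rank. The sums of `r₀` elements of the complex cone form the image
of the polynomial map `X_ℂ^{r₀} → ℂ^{n+1}`, `(x₁, …, x_{r₀}) ↦ ∑ xᵢ`. This image contains a nonempty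
Euclidean-open subset of `ℝ^{n+1}`, hence is Zariski dense in `ℂ^{n+1}`
(`eq_zero_of_vanish_on_real_open`). By Chevalley's theorem it is constructible, so it contains the
nonvanishing locus `D(a)` of some nonzero polynomial `a` (`exists_basicOpen_subset_image`).

Given any `v`, the polynomials `a(y)` and `a(v - y)` are both nonzero, so some `y` satisfies
`y ∈ D(a)` and `v - y ∈ D(a)`. Then `v = y + (v - y)` is a sum of `2 r₀` elements of the cone.
-/


open MvPolynomial

/-- `r` is a typical rank with respect to the real cone `Xhat` if the set of vectors of
`X`-rank exactly `r` contains a nonempty Euclidean-open subset of `ℝ^{n+1}`. -/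
def IsTypicalRank {n : ℕ} (Xhat : Set (Fin (n + 1) → ℝ)) (r : ℕ) : Prop :=
  ∃ U : Set (Fin (n + 1) → ℝ), IsOpen U ∧ U.Nonempty ∧ ∀ v ∈ U, xRank Xhat v = (r : ℕ∞)

/-- A constructible set either contains or misses a neighbourhood of the generic point. -/
lemma exists_basicOpen_subset_or_subset_compl {A : Type*} [CommRing A] [IsDomain A]
    {s : Set (PrimeSpectrum A)} (hs : Topology.IsConstructible s) :
    ∃ a : A, a ≠ 0 ∧ ((PrimeSpectrum.basicOpen a : Set (PrimeSpectrum A)) ⊆ s ∨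
      (PrimeSpectrum.basicOpen a : Set (PrimeSpectrum A)) ⊆ sᶜ) := by
  induction hs using Topology.IsConstructible.empty_union_induction with
  | open_retrocompact U hUopen _ =>
    by_cases hU : U = ∅
    · exact ⟨1, one_ne_zero, Or.inr (by simp [hU])⟩
    · obtain ⟨x, hx⟩ := Set.nonempty_iff_ne_empty.mpr hU
      obtain ⟨_, ⟨a, rfl⟩, hxa, haU⟩ :=
        PrimeSpectrum.isTopologicalBasis_basic_opens.exists_subset_of_mem_open hx hUopen
      refine ⟨a, ?_, Or.inl haU⟩
      rintro rfl
      simp at hxa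
  | union s _ t _ ihs iht =>
    obtain ⟨a, ha, has⟩ := ihs
    obtain ⟨b, hb, hbt⟩ := iht
    rcases has with has | has
    · exact ⟨a, ha, Or.inl (has.trans Set.subset_union_left)⟩
    rcases hbt with hbt | hbt
    · exact ⟨b, hb, Or.inl (hbt.trans Set.subset_union_right)⟩
    refine ⟨a * b, mul_ne_zero ha hb, Or.inr ?_⟩
    rw [PrimeSpectrum.basicOpen_mul, Set.compl_union]
    exact fun x hx => ⟨has hx.1, hbt hx.2⟩
  | compl s _ ih =>
    obtain ⟨a, ha, has⟩ := ih
    exact ⟨a, ha, by rw [compl_compl]; exact has.symm⟩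

/-- Chevalley's theorem on closed points: a polynomial map `g` from the zero set of an ideal `J`
that is dominant (no nonzero polynomial pulls back into `J`) has an image containing the
nonvanishing locus of a nonzero polynomial. -/
lemma exists_basicOpen_subset_image {K σ τ : Type*} [Field K] [IsAlgClosed K] [Finite σ] [Finite τ]
    (g : σ → MvPolynomial τ K) (J : Ideal (MvPolynomial τ K))
    (hinj : ∀ p : MvPolynomial σ K, aeval g p ∈ J → p = 0) :
    ∃ a : MvPolynomial σ K, a ≠ 0 ∧ ∀ y : σ → K, eval y a ≠ 0 →
      ∃ x : τ → K, (∀ p ∈ J, eval x p = 0) ∧ ∀ s, eval x (g s) = y s := by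
  let φ : MvPolynomial σ K →ₐ[K] MvPolynomial τ K ⧸ J :=
    (Ideal.Quotient.mkₐ K J).comp (aeval g)
  have hφ : Function.Injective φ.toRingHom := by
    rw [injective_iff_map_eq_zero]
    intro p hp
    exact hinj p (Ideal.Quotient.eq_zero_iff_mem.mp hp)
  have hft : φ.toRingHom.FiniteType := by
    apply RingHom.FiniteType.of_comp_finiteType (f := algebraMap K (MvPolynomial σ K))
    have : φ.toRingHom.comp (algebraMap K (MvPolynomial σ K)) =
        algebraMap K (MvPolynomial τ K ⧸ J) := φ.comp_algebraMap
    rw [this, RingHom.finiteType_algebraMap]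
    infer_instance
  have hfp : φ.toRingHom.FinitePresentation := RingHom.FinitePresentation.of_finiteType.mp hft
  obtain ⟨a, ha, h⟩ :=
    exists_basicOpen_subset_or_subset_compl (PrimeSpectrum.isConstructible_range_comap hfp)
  -- Injectivity puts the generic point of the target in the image.
  have hbot : (⊥ : PrimeSpectrum (MvPolynomial σ K)) ∈
      Set.range (PrimeSpectrum.comap φ.toRingHom) := by
    obtain ⟨q, hq, hqe⟩ := Ideal.exists_comap_eq_of_mem_minimalPrimes_of_injective hφ ⊥
      (by rw [IsDomain.minimalPrimes_eq_singleton_bot]; rfl)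
    exact ⟨⟨q, hq⟩, PrimeSpectrum.ext hqe⟩
  have hbota : (⊥ : PrimeSpectrum (MvPolynomial σ K)) ∈ PrimeSpectrum.basicOpen a := by
    rw [PrimeSpectrum.mem_basicOpen]
    exact fun h => ha h
  replace h := h.resolve_right fun h => h hbota hbot
  refine ⟨a, ha, fun y hy => ?_⟩
  have hya : (pointToPoint y : PrimeSpectrum (MvPolynomial σ K)) ∈ PrimeSpectrum.basicOpen a := by
    rw [PrimeSpectrum.mem_basicOpen]
    intro h
    exact hy ((mem_vanishingIdeal_singleton_iff y a).mp h)
  obtain ⟨q, hq⟩ := h hya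
  -- A maximal ideal above the prime lying over `y` is a point, by the Nullstellensatz.
  obtain ⟨M, hM, hqM⟩ :=
    Ideal.exists_le_maximal (q.asIdeal.comap (Ideal.Quotient.mk J)) Ideal.IsPrime.ne_top'
  obtain ⟨x, rfl⟩ := isMaximal_iff_eq_vanishingIdeal_singleton.mp hM
  refine ⟨x, fun p hp => ?_, fun s => ?_⟩
  · refine (mem_vanishingIdeal_singleton_iff x p).mp (hqM ?_)
    rw [Ideal.mem_comap, Ideal.Quotient.eq_zero_iff_mem.mpr hp]
    exact zero_mem _
  · have h1 : (X s - C (y s) : MvPolynomial σ K) ∈ (PrimeSpectrum.comap φ.toRingHom q).asIdeal := by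
      rw [hq]
      exact (mem_vanishingIdeal_singleton_iff y _).mpr (by simp)
    have h2 : g s - C (y s) ∈ q.asIdeal.comap (Ideal.Quotient.mk J) := by
      have h3 : φ (X s - C (y s)) ∈ q.asIdeal := h1
      have h4 : φ (X s - C (y s)) = Ideal.Quotient.mk J (g s - C (y s)) := by
        change Ideal.Quotient.mk J (aeval g (X s - C (y s))) = _
        congr 1
        simp
      rw [Ideal.mem_comap, ← h4]
      exact h3
    have h5 := (mem_vanishingIdeal_singleton_iff x _).mp (hqM h2)
    rw [map_sub, sub_eq_zero, aeval_C] at h5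
    exact h5

lemma eq_zero_of_vanish_on_real_open {σ : Type*} [Finite σ] {U : Set (σ → ℝ)}
    (hU : IsOpen U) (hne : U.Nonempty) (p : MvPolynomial σ ℂ)
    (hp : ∀ u ∈ U, eval (fun i => (u i : ℂ)) p = 0) : p = 0 := by
  have := Fintype.ofFinite σ
  obtain ⟨u, hu⟩ := hne
  obtain ⟨ε, hε, hball⟩ := Metric.isOpen_iff.mp hU u hu
  refine funext_set (fun i => Complex.ofReal '' Metric.ball (u i) ε) (fun i => ?_) fun x hx => ?_
  · refine Set.Infinite.image Complex.ofReal_injective.injOn ?_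
    rw [Real.ball_eq_Ioo]
    exact Set.Ioo_infinite (by linarith)
  · choose w hw hwx using fun i => hx i (Set.mem_univ i)
    obtain rfl : (fun i => (w i : ℂ)) = x := _root_.funext hwx
    rw [hp w (hball ?_), map_zero]
    rw [Metric.mem_ball, dist_pi_lt_iff hε]
    exact hw

lemma mem_sumsOf_of_xRank_eq {F σ : Type*} [CommSemiring F] {S : Set (σ → F)} {v : σ → F} {r : ℕ}
    (h : xRank S v = (r : ℕ∞)) : v ∈ sumsOf S r := by
  have hne : {r : ℕ∞ | ∃ s : ℕ, r = s ∧ v ∈ sumsOf S s}.Nonempty := by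
    by_contra hcon
    rw [Set.not_nonempty_iff_eq_empty] at hcon
    rw [xRank, hcon, sInf_empty] at h
    exact ENat.top_ne_natCast r h
  obtain ⟨s, hs, hv⟩ := csInf_mem hne
  have hsr : r = s := by
    have h' : (r : ℕ∞) = s := h.symm.trans hs
    exact_mod_cast h'
  exact hsr ▸ hv

lemma sumsOf_add {F σ : Type*} [CommSemiring F] {S : Set (σ → F)} {v w : σ → F} {r s : ℕ}
    (hv : v ∈ sumsOf S r) (hw : w ∈ sumsOf S s) : v + w ∈ sumsOf S (r + s) := by
  obtain ⟨f, hf, rfl⟩ := hv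
  obtain ⟨g, hg, rfl⟩ := hw
  refine ⟨Fin.append f g, fun i => ?_, by simp [Fin.sum_univ_add]⟩
  refine Fin.addCases (fun i => ?_) (fun i => ?_) i
  · simpa using hf i
  · simpa using hg i

/-- Two nonvanishing loci `D(a)` and `v - D(a)` of affine space meet. -/
lemma exists_eval_ne_zero_and_eval_sub_ne_zero {K σ : Type*} [Field K] [Infinite K]
    {a : MvPolynomial σ K} (ha : a ≠ 0) (v : σ → K) :
    ∃ y : σ → K, eval y a ≠ 0 ∧ eval (v - y) a ≠ 0 := by
  let b : MvPolynomial σ K := aeval (fun i => C (v i) - X i) a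
  have hb (y : σ → K) : eval y b = eval (v - y) a := by
    simp only [b, aeval_def, algebraMap_eq, eval_eval₂]
    rw [eval₂_eq_eval_map]
    congr 2
    · ext i
      simp
    · convert map_id a
      ext
      simp
  have hb0 : b ≠ 0 := by
    intro h
    refine ha (MvPolynomial.funext fun z => ?_)
    have := hb (v - z)
    rw [h, sub_sub_cancel] at this
    simpa using this.symm
  have hab : a * b ≠ 0 := mul_ne_zero ha hb0
  by_contra! hcon
  refine hab (MvPolynomial.funext fun y => ?_)
  rw [map_mul, hb, map_zero]
  by_cases h : eval y a = 0
  · rw [h, zero_mul]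
  · rw [hcon y h, mul_zero]

/-- For a real irreducible nondegenerate projective variety with
Zariski-dense real points, the maximum complex rank with respect to the
complexification is at most twice the minimum typical rank. -/
theorem stmt_14 {n : ℕ} (I : Set (MvPolynomial (Fin (n + 1)) ℝ))
    (XhatR : Set (Fin (n + 1) → ℝ)) (XhatC : Set (Fin (n + 1) → ℂ))
    (hXR : XhatR = zLocus I)
    (hXC : XhatC = zLocus (⇑(MvPolynomial.map (algebraMap ℝ ℂ)) '' I))
    (hcone : IsCone XhatR) (hirr : IsZIrreducible XhatR)
    (hnondeg : Submodule.span ℝ XhatR = ⊤)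
    (hdense : ∀ C : Set (Fin (n + 1) → ℂ), IsZClosed C →
      (fun x : Fin (n + 1) → ℝ => fun i => (x i : ℂ)) '' XhatR ⊆ C → XhatC ⊆ C)
    (r0 : ℕ) (hr0 : IsLeast {r : ℕ | IsTypicalRank XhatR r} r0)
    (rmaxC : ℕ∞)
    (hmaxC : IsGreatest
      {r : ℕ∞ | ∃ v : Fin (n + 1) → ℂ, v ≠ 0 ∧ xRank XhatC v = r} rmaxC) :
    rmaxC ≤ 2 * (r0 : ℕ∞) := by
  obtain ⟨v, -, rfl⟩ := hmaxC.1
  obtain ⟨U, hUo, hUne, hU⟩ := hr0.1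
  -- `J` is the vanishing ideal of the `r0`-fold product of the complex cone,
  -- and `g` is the summation map on it.
  let J : Ideal (MvPolynomial (Fin r0 × Fin (n + 1)) ℂ) :=
    vanishingIdeal ℂ {x | ∀ i, (fun j => x (i, j)) ∈ XhatC}
  let g : Fin (n + 1) → MvPolynomial (Fin r0 × Fin (n + 1)) ℂ := fun j => ∑ i, X (i, j)
  have hreal : ∀ x ∈ XhatR, (fun i => (x i : ℂ)) ∈ XhatC := by
    intro x hx
    subst hXR hXC
    rintro _ ⟨p, hp, rfl⟩
    have h1 : aeval (fun i => (x i : ℂ)) p = algebraMap ℝ ℂ (aeval x p) :=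
      aeval_algebraMap_apply ℂ x p
    have h2 : aeval x p = 0 := hx p hp
    rw [h2, map_zero] at h1
    rw [eval_map]
    exact h1
  have hinj : ∀ p : MvPolynomial (Fin (n + 1)) ℂ, aeval g p ∈ J → p = 0 := by
    intro p hp
    refine eq_zero_of_vanish_on_real_open hUo hUne p fun u hu => ?_
    obtain ⟨f, hf, rfl⟩ := mem_sumsOf_of_xRank_eq (hU u hu)
    have h1 := hp (fun ij => (f ij.1 ij.2 : ℂ)) fun i => hreal _ (hf i)
    rw [← AlgHom.comp_apply, comp_aeval] at h1
    rw [← h1]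
    change aeval _ p = aeval _ p
    congr 2
    ext j
    simp [g]
  obtain ⟨a, ha, himg⟩ := exists_basicOpen_subset_image g J hinj
  have hsum : ∀ y : Fin (n + 1) → ℂ, eval y a ≠ 0 → y ∈ sumsOf XhatC r0 := by
    intro y hy
    obtain ⟨x, hxJ, hxy⟩ := himg y hy
    refine ⟨fun i j => x (i, j), fun i => ?_, ?_⟩
    · rw [hXC]
      intro p hp
      have h1 : rename (Prod.mk i) p ∈ J := by
        intro z hz
        have h2 := hz i
        rw [hXC] at h2
        have h3 := h2 p hp
        rw [aeval_rename]
        exact h3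
      have h4 := hxJ _ h1
      rw [eval_rename] at h4
      exact h4
    · ext j
      rw [← hxy j]
      simp [g]
  obtain ⟨y, hy1, hy2⟩ := exists_eval_ne_zero_and_eval_sub_ne_zero ha v
  have hv := sumsOf_add (hsum y hy1) (hsum _ hy2)
  rw [add_sub_cancel] at hv
  refine sInf_le ⟨r0 + r0, ?_, hv⟩
  rw [two_mul, Nat.cast_add]
end
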